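/- Let T > 0 and θ, μ ∈ (0,1) with θ + μ > 1. There exists a constant c > 0, depending only on θ and μ, such that for every θ-Hölder continuous f : [0,T] → ℝ, every μ-Hölder continuous g : [0,T] → ℝ, every 0 ≤ a < b ≤ T, and every real number L which is the limit of the Riemann sums S_n = Σ_{k=0}^{n−1} f(kT/n)·( g(min(max((k+1)T/n, a), b)) − g(min(max(kT/n, a), b)) ), one has |L| ≤ c·( ‖f‖_∞ · ‖g‖_μ · (b − a)^{μ} + ‖f‖_θ · ‖g‖_μ · (b − a)^{μ+θ} ), where ‖f‖_∞ = sup_{t ∈ [0,T]} |f(t)|. -/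

import Mathlib

/-!
The Riemann sums themselves obey the bound, uniformly in `n ≥ 1`, so their limit does.

Write `u k` for the clamping of `k T / n` to `[a, b]`. Replacing `f (k T / n)` by `f (u k)` changes
only the term of the mesh interval that contains `a`, because all other increments of `g` either
vanish or have `u k = k T / n`; this costs at most `2 ‖f‖_∞ ‖g‖_μ (b - a)^μ`. What remains is the
left-point sum of `f` against `g` along a monotone sequence from `a` to `b`, and Young's
maximal inequality (`young_maximal`) compares it with `f a * (g b - g a)` up to
`C ‖f‖_θ ‖g‖_μ (b - a)^(θ + μ)`.

Young's inequality is proved by bisection: the step `[u j, u (j + 1)]` containing the midpoint of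
`[u i, u k]` is split off, leaving two shorter chains, each spanning at most half the length.
The resulting recursion `E(ℓ) ≤ 2 E(ℓ / 2) + 2 ‖f‖_θ ‖g‖_μ ℓ^p`, with `p = θ + μ > 1`, is solved by
`E(ℓ) = C ‖f‖_θ ‖g‖_μ ℓ^p`, where `C = 2 / (1 - 2^(1 - p))`.
-/

open Filter

/-- The set of Hölder quotients `|f t - f s| / (t - s)^θ` over `0 ≤ s < t ≤ T`.
`f` is θ-Hölder continuous on `[0,T]` iff this set is bounded above. -/
def holderSet (T θ : ℝ) (f : ℝ → ℝ) : Set ℝ :=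
  {r | ∃ s t : ℝ, 0 ≤ s ∧ s < t ∧ t ≤ T ∧ r = |f t - f s| / (t - s) ^ θ}

/-- The Hölder seminorm `‖f‖_θ = sup_{0 ≤ s < t ≤ T} |f t - f s| / (t-s)^θ`. -/
noncomputable def holderNorm (T θ : ℝ) (f : ℝ → ℝ) : ℝ :=
  sSup (holderSet T θ f)

/-- The uniform norm `‖f‖_∞ = sup_{t ∈ [0,T]} |f t|`. -/
noncomputable def supNorm (T : ℝ) (f : ℝ → ℝ) : ℝ :=
  sSup ((fun t => |f t|) '' Set.Icc 0 T)

/-- The Riemann sum `S_n = Σ_{k=0}^{n-1} f(kT/n) ⬝ (g(min(max((k+1)T/n, a), b)) -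
g(min(max(kT/n, a), b)))`. -/
noncomputable def riemannSum (T a b : ℝ) (f g : ℝ → ℝ) (n : ℕ) : ℝ :=
  ∑ k ∈ Finset.range n,
    f (k * T / n) *
      (g (min (max ((k + 1) * T / n) a) b) - g (min (max (k * T / n) a) b))

lemma exists_step_containing (u : ℕ → ℝ) (m : ℝ) {i k : ℕ} (hik : i < k) (hi : u i ≤ m)
    (hk : m ≤ u k) : ∃ j, i ≤ j ∧ j < k ∧ u j ≤ m ∧ m ≤ u (j + 1) := by
  induction k, hik using Nat.le_induction with
  | base => exact ⟨i, le_rfl, Nat.lt_succ_self i, hi, hk⟩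
  | succ k hik ih =>
    rcases le_total (u k) m with h | h
    · exact ⟨k, Nat.le_of_succ_le hik, Nat.lt_succ_self k, h, hk⟩
    · obtain ⟨j, h1, h2, h3, h4⟩ := ih h
      exact ⟨j, h1, h2.trans (Nat.lt_succ_self k), h3, h4⟩

/-- The bound extends the defining property of the seminorm to `s = t`, since `0 ^ θ = 0`. -/
lemma abs_sub_le_holderNorm {T θ : ℝ} {f : ℝ → ℝ} (hθ : 0 < θ) (hf : BddAbove (holderSet T θ f))
    {s t : ℝ} (hs : 0 ≤ s) (hst : s ≤ t) (ht : t ≤ T) :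
    |f t - f s| ≤ holderNorm T θ f * (t - s) ^ θ := by
  rcases hst.eq_or_lt with rfl | h
  · simp [Real.zero_rpow hθ.ne']
  · rw [← div_le_iff₀ (Real.rpow_pos_of_pos (sub_pos.2 h) θ)]
    exact le_csSup hf ⟨s, t, hs, h, ht, rfl⟩

lemma holderNorm_nonneg (T θ : ℝ) (f : ℝ → ℝ) : 0 ≤ holderNorm T θ f := by
  apply Real.sSup_nonneg
  rintro r ⟨s, t, -, hst, -, rfl⟩
  exact div_nonneg (abs_nonneg _) (Real.rpow_nonneg (sub_pos.2 hst).le _)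

lemma abs_le_supNorm {T θ : ℝ} {f : ℝ → ℝ} (hθ : 0 < θ) (hf : BddAbove (holderSet T θ f))
    {t : ℝ} (h0 : 0 ≤ t) (ht : t ≤ T) : |f t| ≤ supNorm T f := by
  refine le_csSup ⟨|f 0| + holderNorm T θ f * T ^ θ, ?_⟩ ⟨t, ⟨h0, ht⟩, rfl⟩
  rintro _ ⟨x, ⟨hx0, hxT⟩, rfl⟩
  have h1 := abs_sub_le_holderNorm hθ hf le_rfl hx0 hxT
  rw [sub_zero] at h1
  have h2 : holderNorm T θ f * x ^ θ ≤ holderNorm T θ f * T ^ θ :=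
    mul_le_mul_of_nonneg_left (Real.rpow_le_rpow hx0 hxT hθ.le) (holderNorm_nonneg T θ f)
  have h3 := abs_sub_abs_le_abs_sub (f x) (f 0)
  simp only
  linarith

/-- Young's maximal inequality along a monotone sequence, with a constant independent of the
number of points. Here `φ` and `γ` stand for the values of `f` and `g` along `u`. -/
lemma young_maximal {θ μ C F G : ℝ} (hθ : 0 < θ) (hμ : 0 < μ) (hC : 0 ≤ C)
    (hCeq : 2 * C * (1 / 2) ^ (θ + μ) + 2 = C) (hF : 0 ≤ F) (hG : 0 ≤ G)
    (u φ γ : ℕ → ℝ) (hu : Monotone u)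
    (hφ : ∀ i k, i ≤ k → |φ k - φ i| ≤ F * (u k - u i) ^ θ)
    (hγ : ∀ i k, i ≤ k → |γ k - γ i| ≤ G * (u k - u i) ^ μ) (i k : ℕ) (hik : i ≤ k) :
    |∑ l ∈ Finset.Ico i k, φ l * (γ (l + 1) - γ l) - φ i * (γ k - γ i)|
      ≤ C * (F * G * (u k - u i) ^ (θ + μ)) := by
  obtain ⟨d, hd⟩ : ∃ d, k - i = d := ⟨_, rfl⟩
  induction d using Nat.strong_induction_on generalizing i k with
  | _ d ih =>
  have hFG : 0 ≤ F * G := mul_nonneg hF hG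
  have hl : 0 ≤ u k - u i := sub_nonneg.2 (hu hik)
  rcases hik.eq_or_lt with rfl | hlt
  · simp only [Finset.Ico_self, Finset.sum_empty, sub_self, mul_zero, abs_zero]
    have := Real.rpow_nonneg (le_refl (0 : ℝ)) (θ + μ)
    positivity
  obtain ⟨j, hij, hjk, hj1, hj2⟩ :=
    exists_step_containing u ((u i + u k) / 2) hlt (by linarith) (by linarith)
  have hjk' : j + 1 ≤ k := hjk
  have half : ∀ x, 0 ≤ x → x ≤ (u k - u i) / 2 →
      C * (F * G * x ^ (θ + μ)) ≤
        C * (F * G * ((u k - u i) ^ (θ + μ) * (1 / 2) ^ (θ + μ))) := by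
    intro x hx0 hx
    rw [← Real.mul_rpow hl (by norm_num)]
    have := Real.rpow_le_rpow hx0 (hx.trans_eq (by ring : _ = (u k - u i) * (1 / 2)))
      (add_pos hθ hμ).le
    gcongr
  have e1 := (ih (j - i) (by omega) i j hij rfl).trans
    (half _ (sub_nonneg.2 (hu hij)) (by linarith))
  have e2 := (ih (k - (j + 1)) (by omega) (j + 1) k hjk' rfl).trans
    (half _ (sub_nonneg.2 (hu hjk')) (by linarith))
  -- A correction term, for increments of `φ` and `γ` over adjacent subintervals.
  have cross : ∀ p q, i ≤ p → p ≤ q → q ≤ k →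
      |(φ p - φ i) * (γ q - γ p)| ≤ F * G * (u k - u i) ^ (θ + μ) := by
    intro p q hip hpq hqk
    have h1 := hu hip
    have h2 := hu hpq
    have h3 := hu hqk
    have hp : |φ p - φ i| ≤ F * (u k - u i) ^ θ := (hφ i p hip).trans
      (mul_le_mul_of_nonneg_left
        (Real.rpow_le_rpow (by linarith) (by linarith) hθ.le) hF)
    have hq : |γ q - γ p| ≤ G * (u k - u i) ^ μ := (hγ p q hpq).trans
      (mul_le_mul_of_nonneg_left
        (Real.rpow_le_rpow (by linarith) (by linarith) hμ.le) hG)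
    rw [abs_mul, Real.rpow_add_of_nonneg hl hθ.le hμ.le]
    calc _ ≤ (F * (u k - u i) ^ θ) * (G * (u k - u i) ^ μ) :=
          mul_le_mul hp hq (abs_nonneg _) ((abs_nonneg _).trans hp)
      _ = _ := by ring
  have e3 := cross j (j + 1) hij (Nat.le_succ j) hjk'
  have e4 := cross (j + 1) k (by omega) hjk' le_rfl
  have split : ∑ l ∈ Finset.Ico i k, φ l * (γ (l + 1) - γ l)
      = ∑ l ∈ Finset.Ico i j, φ l * (γ (l + 1) - γ l) + φ j * (γ (j + 1) - γ j)
        + ∑ l ∈ Finset.Ico (j + 1) k, φ l * (γ (l + 1) - γ l) := by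
    rw [← Finset.sum_Ico_succ_top hij, Finset.sum_Ico_consecutive _ (by omega) hjk']
  have key : C * (F * G * (u k - u i) ^ (θ + μ)) =
      2 * (C * (F * G * ((u k - u i) ^ (θ + μ) * (1 / 2) ^ (θ + μ))))
        + 2 * (F * G * (u k - u i) ^ (θ + μ)) := by
    linear_combination (-(F * G * (u k - u i) ^ (θ + μ))) * hCeq
  rw [split, key]
  rw [abs_le] at e1 e2 e3 e4 ⊢
  constructor <;> linarith [e1.1, e1.2, e2.1, e2.2, e3.1, e3.2, e4.1, e4.2]

/-- The estimate at each fixed `n ≥ 1`. The `3` splits as `2` for moving the evaluation points of `f`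
into `[a, b]` and `1` for the main term `f a * (g b - g a)`. -/
lemma abs_riemannSum_le {θ μ C T : ℝ} (hθ : 0 < θ) (hμ : 0 < μ) (hC : 0 ≤ C)
    (hCeq : 2 * C * (1 / 2) ^ (θ + μ) + 2 = C) (hT : 0 < T) {f g : ℝ → ℝ}
    (hf : BddAbove (holderSet T θ f)) (hg : BddAbove (holderSet T μ g))
    {a b : ℝ} (ha : 0 ≤ a) (hab : a < b) (hb : b ≤ T) {n : ℕ} (hn : 0 < n) :
    |riemannSum T a b f g n| ≤ 3 * (supNorm T f * holderNorm T μ g * (b - a) ^ μ) +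
      C * (holderNorm T θ f * holderNorm T μ g * (b - a) ^ (θ + μ)) := by
  have hn' : (0 : ℝ) < n := Nat.cast_pos.2 hn
  obtain ⟨t, ht⟩ : ∃ t : ℕ → ℝ, t = fun k : ℕ => (k : ℝ) * T / n := ⟨_, rfl⟩
  obtain ⟨u, hu⟩ : ∃ u : ℕ → ℝ, u = fun k => min (max (t k) a) b := ⟨_, rfl⟩
  have htm : Monotone t := by
    intro i k hik
    have : (i : ℝ) ≤ k := Nat.cast_le.2 hik
    simp only [ht]
    gcongr
  have hum : Monotone u := by
    intro i k hik
    simp only [hu]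
    exact min_le_min (max_le_max (htm hik) le_rfl) le_rfl
  have ht0 : t 0 = 0 := by simp [ht]
  have htn : t n = T := by simp only [ht]; field_simp
  have hua : ∀ k, a ≤ u k := fun k => by
    simp only [hu]; exact le_min (le_max_right _ _) hab.le
  have hub : ∀ k, u k ≤ b := fun k => by simp only [hu]; exact min_le_right _ _
  have hu0 : u 0 = a := by simp only [hu, ht0]; rw [max_eq_right ha, min_eq_left hab.le]
  have hun : u n = b := by simp only [hu, htn]; exact min_eq_right (hb.trans (le_max_left _ _))
  have hS : riemannSum T a b f g n
      = ∑ k ∈ Finset.range n, f (t k) * (g (u (k + 1)) - g (u k)) := by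
    simp only [riemannSum, hu, ht]
    push_cast
    rfl
  have hG := holderNorm_nonneg T μ g
  have hF := holderNorm_nonneg T θ f
  have hM : 0 ≤ supNorm T f := (abs_nonneg _).trans (abs_le_supNorm hθ hf ha (hab.le.trans hb))
  have hinc : ∀ i k, i ≤ k → |g (u k) - g (u i)| ≤ holderNorm T μ g * (b - a) ^ μ := by
    intro i k hik
    refine (abs_sub_le_holderNorm hμ hg (ha.trans (hua i)) (hum hik)
      ((hub k).trans hb)).trans (mul_le_mul_of_nonneg_left
        (Real.rpow_le_rpow (sub_nonneg.2 (hum hik)) ?_ hμ.le) hG)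
    linarith [hua i, hub k]
  -- Only the mesh interval `[t j, t (j + 1)]` containing `a` contributes to the difference.
  obtain ⟨j, -, hjn, hj1, hj2⟩ := exists_step_containing t a hn (ht0.trans_le ha)
    ((hab.le.trans hb).trans_eq htn.symm)
  have hdiff : ∑ k ∈ Finset.range n, (f (t k) - f (u k)) * (g (u (k + 1)) - g (u k))
      = (f (t j) - f (u j)) * (g (u (j + 1)) - g (u j)) := by
    refine Finset.sum_eq_single_of_mem j (Finset.mem_range.2 hjn) fun k _ hkj => ?_
    rcases lt_or_gt_of_ne hkj with h | h
    · have h1 : t (k + 1) ≤ a := (htm h).trans hj1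
      have h2 : t k ≤ a := (htm (Nat.le_succ k)).trans h1
      have : u (k + 1) = u k := by
        simp only [hu]; rw [max_eq_right h1, max_eq_right h2]
      rw [this]; ring
    · have h1 : a ≤ t k := hj2.trans (htm h)
      rcases le_total (t k) b with h2 | h2
      · have : u k = t k := by simp only [hu]; rw [max_eq_left h1, min_eq_left h2]
        rw [this]; ring
      · have h3 : b ≤ u k := by
          simp only [hu]; exact le_min (h2.trans (le_max_left _ _)) le_rfl
        have h4 : u (k + 1) = u k :=
          le_antisymm ((hub _).trans h3) (hum (Nat.le_succ k))
        rw [h4]; ring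
  have b1 : |(f (t j) - f (u j)) * (g (u (j + 1)) - g (u j))|
      ≤ 2 * (supNorm T f * holderNorm T μ g * (b - a) ^ μ) := by
    have h1 : |f (t j)| ≤ supNorm T f := abs_le_supNorm hθ hf
      (ht0.symm.trans_le (htm (Nat.zero_le j))) ((htm hjn.le).trans_eq htn)
    have h2 : |f (u j)| ≤ supNorm T f :=
      abs_le_supNorm hθ hf (ha.trans (hua j)) ((hub j).trans hb)
    have h3 : |f (t j) - f (u j)| ≤ 2 * supNorm T f := by
      linarith [abs_sub (f (t j)) (f (u j))]
    rw [abs_mul]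
    calc _ ≤ (2 * supNorm T f) * (holderNorm T μ g * (b - a) ^ μ) :=
          mul_le_mul h3 (hinc _ _ (Nat.le_succ j)) (abs_nonneg _) (by positivity)
      _ = _ := by ring
  have b2 : |f (u 0) * (g (u n) - g (u 0))|
      ≤ supNorm T f * holderNorm T μ g * (b - a) ^ μ := by
    rw [abs_mul, mul_assoc]
    exact mul_le_mul (abs_le_supNorm hθ hf (ha.trans (hua 0)) ((hub 0).trans hb))
      (hinc _ _ (Nat.zero_le n)) (abs_nonneg _) hM
  have b3 := young_maximal hθ hμ hC hCeq hF hG u (fun k => f (u k)) (fun k => g (u k)) hum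
    (fun i k hik => abs_sub_le_holderNorm hθ hf (ha.trans (hua i)) (hum hik) ((hub k).trans hb))
    (fun i k hik => abs_sub_le_holderNorm hμ hg (ha.trans (hua i)) (hum hik) ((hub k).trans hb))
    0 n (Nat.zero_le n)
  rw [← Finset.range_eq_Ico] at b3
  have b4 : (b - a) = u n - u 0 := by rw [hun, hu0]
  have hsum : riemannSum T a b f g n
      = (f (t j) - f (u j)) * (g (u (j + 1)) - g (u j))
        + ∑ k ∈ Finset.range n, f (u k) * (g (u (k + 1)) - g (u k)) := by
    rw [hS, ← hdiff, ← Finset.sum_add_distrib]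
    exact Finset.sum_congr rfl fun k _ => by ring
  rw [← b4] at b3
  rw [hsum]
  rw [abs_le] at b1 b2 b3 ⊢
  constructor <;> linarith [b1.1, b1.2, b2.1, b2.2, b3.1, b3.2]

/-- there is a constant `c > 0` depending only on `θ` and `μ` such that
any limit `L` of the Riemann sums satisfies
`|L| ≤ c (‖f‖_∞ ‖g‖_μ (b-a)^μ + ‖f‖_θ ‖g‖_μ (b-a)^{μ+θ})`. -/
theorem young_integral_bound
    (θ μ : ℝ) (hθ : θ ∈ Set.Ioo (0 : ℝ) 1) (hμ : μ ∈ Set.Ioo (0 : ℝ) 1) (hθμ : 1 < θ + μ) :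
    ∃ c : ℝ, 0 < c ∧
      ∀ T : ℝ, 0 < T → ∀ f g : ℝ → ℝ,
        BddAbove (holderSet T θ f) → BddAbove (holderSet T μ g) →
        ∀ a b : ℝ, 0 ≤ a → a < b → b ≤ T → ∀ L : ℝ,
          Tendsto (fun n : ℕ => riemannSum T a b f g n) atTop (nhds L) →
          |L| ≤ c * (supNorm T f * holderNorm T μ g * (b - a) ^ μ +
            holderNorm T θ f * holderNorm T μ g * (b - a) ^ (μ + θ)) := by
  obtain ⟨hθ0, -⟩ := hθ
  obtain ⟨hμ0, -⟩ := hμ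
  have hq : ((1 : ℝ) / 2) ^ (θ + μ) < 1 / 2 := by
    have := Real.rpow_lt_rpow_of_exponent_gt (x := (1 : ℝ) / 2) (by norm_num) (by norm_num) hθμ
    rwa [Real.rpow_one] at this
  set q : ℝ := (1 / 2) ^ (θ + μ) with hqdef
  have hpos : 0 < 1 - 2 * q := by linarith
  -- The solution of `2 * C * q + 2 = C`, the fixed point of the bisection recursion.
  obtain ⟨C, hCdef⟩ : ∃ C : ℝ, C = 2 / (1 - 2 * q) := ⟨_, rfl⟩
  have hC : 0 < C := by rw [hCdef]; positivity
  have hCeq : 2 * C * q + 2 = C := by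
    have : C * (1 - 2 * q) = 2 := by rw [hCdef]; field_simp
    linarith
  refine ⟨3 + C, by positivity, ?_⟩
  intro T hT f g hf hg a b ha hab hb L hL
  have hM : 0 ≤ supNorm T f := (abs_nonneg _).trans (abs_le_supNorm hθ0 hf ha (hab.le.trans hb))
  have hG := holderNorm_nonneg T μ g
  have hF := holderNorm_nonneg T θ f
  have hba : 0 ≤ b - a := (sub_pos.2 hab).le
  refine le_of_tendsto hL.abs ?_
  filter_upwards [eventually_gt_atTop 0] with n hn
  have h := abs_riemannSum_le hθ0 hμ0 hC.le hCeq hT hf hg ha hab hb hn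
  rw [add_comm θ μ] at h
  have h1 : 0 ≤ supNorm T f * holderNorm T μ g * (b - a) ^ μ := by positivity
  have h2 : 0 ≤ holderNorm T θ f * holderNorm T μ g * (b - a) ^ (μ + θ) := by positivity
  linarith [mul_nonneg hC.le h1]
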